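/- For every h > 0 and t ∈ (0,1), the partial derivative with respect to t of Φ_high(h,t) = 2h e^{−2h²} erfc( h(1−2t)/√(2t(1−t)) ) equals √(2/π) · h² / √(t³(1−t)³) · exp( −h²/(2t(1−t)) ), where erfc(x) = (2/√π) ∫_x^∞ e^{−u²} du. -/

import Mathlib

open Real MeasureTheory Set

noncomputable def erfc (x : ℝ) : ℝ := (2 / Real.sqrt π) * ∫ u in Ioi x, Real.exp (-u ^ 2)

/-!
Write `q = 2t(1 - t)`. Since `(1 - 2t)² = 1 - 2q`, the argument `x = h(1 - 2t)/√q` of `erfc`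
satisfies `x² = h²/q - 2h²`, so the prefactor `exp(-2h²)` is absorbed by the Gaussian `exp(-x²)`
coming from `erfc'`. The same identity collapses the derivative of `x` to `-h/(q√q)`.
-/

theorem hasDerivAt_setIntegral_Ioi {E : Type*} [NormedAddCommGroup E] [NormedSpace ℝ E]
    [CompleteSpace E] {f : ℝ → E} {a x : ℝ} (hf : IntegrableOn f (Ioi a)) (hax : a < x)
    (hfx : ContinuousAt f x) :
    HasDerivAt (fun y => ∫ u in Ioi y, f u) (-f x) x := by
  have hmeas : StronglyMeasurableAtFilter f (nhds x) :=
    ⟨Ioi a, Ioi_mem_nhds hax, hf.aestronglyMeasurable⟩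
  have hint : IntervalIntegrable f volume a x :=
    (intervalIntegrable_iff_integrableOn_Ioc_of_le hax.le).2 (hf.mono_set Ioc_subset_Ioi_self)
  refine ((intervalIntegral.integral_hasDerivAt_right hint hmeas hfx).const_sub
    (∫ u in Ioi a, f u)).congr_of_eventuallyEq ?_
  filter_upwards [Ioi_mem_nhds hax] with y hay
  rw [← intervalIntegral.integral_Ioi_sub_Ioi hf (le_of_lt hay), sub_sub_cancel]

theorem hasDerivAt_erfc (x : ℝ) : HasDerivAt erfc (-(2 / √π * exp (-x ^ 2))) x := by
  have hint : Integrable fun u : ℝ => exp (-u ^ 2) := by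
    simpa only [neg_one_mul] using integrable_exp_neg_mul_sq one_pos
  have hcont : Continuous fun u : ℝ => exp (-u ^ 2) := by fun_prop
  exact ((hasDerivAt_setIntegral_Ioi hint.integrableOn (sub_one_lt x)
    hcont.continuousAt).const_mul (2 / √π)).congr_deriv (mul_neg _ _)

section

variable {t : ℝ}

theorem two_mul_mul_one_sub_pos (ht : t ∈ Ioo (0 : ℝ) 1) : 0 < 2 * t * (1 - t) :=
  mul_pos (mul_pos two_pos ht.1) (sub_pos.2 ht.2)

theorem mul_one_sub_two_mul_div_sqrt_sq (h : ℝ) (ht : t ∈ Ioo (0 : ℝ) 1) :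
    (h * (1 - 2 * t) / √(2 * t * (1 - t))) ^ 2 = h ^ 2 / (2 * t * (1 - t)) - 2 * h ^ 2 := by
  have hq := two_mul_mul_one_sub_pos ht
  rw [div_pow, sq_sqrt hq.le, eq_sub_iff_add_eq, div_add' _ _ _ hq.ne']
  ring

theorem hasDerivAt_mul_one_sub_two_mul_div_sqrt (h : ℝ) (ht : t ∈ Ioo (0 : ℝ) 1) :
    HasDerivAt (fun s => h * (1 - 2 * s) / √(2 * s * (1 - s)))
      (-h / (2 * t * (1 - t) * √(2 * t * (1 - t)))) t := by
  have hq := two_mul_mul_one_sub_pos ht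
  have hnum : HasDerivAt (fun s : ℝ => h * (1 - 2 * s)) (h * -(2 * 1)) t :=
    (((hasDerivAt_id t).const_mul 2).const_sub 1).const_mul h
  have hden : HasDerivAt (fun s : ℝ => 2 * s * (1 - s)) (2 * 1 * (1 - t) + 2 * t * -1) t :=
    ((hasDerivAt_id t).const_mul 2).mul ((hasDerivAt_id t).const_sub 1)
  refine (hnum.div (hden.sqrt hq.ne') (sqrt_ne_zero'.2 hq)).congr_deriv ?_
  have hsq : √(2 * t * (1 - t)) ^ 2 = 2 * t * (1 - t) := sq_sqrt hq.le
  rw [hsq]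
  field_simp
  rw [hsq]
  ring

end

theorem sqrt_two_div_pi_div_sqrt_pow_three {x : ℝ} (hx : 0 < x) :
    √(2 / π) / √(x ^ 3) = 4 / √π / (2 * x * √(2 * x)) := by
  have hcube : √(x ^ 3) = x * √x := by
    rw [pow_succ, sqrt_mul (sq_nonneg x), sqrt_sq hx.le]
  have htwo : √2 ^ 2 = (2 : ℝ) := sq_sqrt zero_le_two
  rw [hcube, sqrt_div zero_le_two, sqrt_mul zero_le_two]
  field_simp
  rw [htwo]
  norm_num

theorem stmt_13_general (h : ℝ) {t : ℝ} (ht : t ∈ Ioo (0 : ℝ) 1) :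
    HasDerivAt
      (fun s => 2 * h * exp (-2 * h ^ 2) * erfc (h * (1 - 2 * s) / √(2 * s * (1 - s))))
      (√(2 / π) * h ^ 2 / √(t ^ 3 * (1 - t) ^ 3) * exp (-h ^ 2 / (2 * t * (1 - t)))) t := by
  refine (((hasDerivAt_erfc _).comp t (hasDerivAt_mul_one_sub_two_mul_div_sqrt h ht)).const_mul
    (2 * h * exp (-2 * h ^ 2))).congr_deriv ?_
  have hgauss : exp (-2 * h ^ 2) * exp (-(h * (1 - 2 * t) / √(2 * t * (1 - t))) ^ 2) =
      exp (-h ^ 2 / (2 * t * (1 - t))) := by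
    rw [← exp_add, mul_one_sub_two_mul_div_sqrt_sq h ht]
    congr 1
    ring
  have hconst : √(2 / π) / √(t ^ 3 * (1 - t) ^ 3) =
      4 / √π / (2 * t * (1 - t) * √(2 * t * (1 - t))) := by
    rw [← mul_pow, sqrt_two_div_pi_div_sqrt_pow_three (mul_pos ht.1 (sub_pos.2 ht.2)),
      ← mul_assoc 2 t]
  rw [mul_div_right_comm √(2 / π), hconst, ← hgauss]
  ring

theorem stmt_13 (h t : ℝ) (hh : 0 < h) (ht : t ∈ Ioo (0:ℝ) 1) :
    deriv
        (fun t' => 2 * h * Real.exp (-2 * h ^ 2) *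
          erfc (h * (1 - 2 * t') / Real.sqrt (2 * t' * (1 - t')))) t =
      Real.sqrt (2 / π) * h ^ 2 / Real.sqrt (t ^ 3 * (1 - t) ^ 3) *
        Real.exp (-h ^ 2 / (2 * t * (1 - t))) :=
  (stmt_13_general h ht).deriv
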